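/- Let C > 0 and let y : ℤ → ℝ be a sequence with y_k ≠ 0 for all k ∈ ℤ and |y_k − k| ≤ C·log(2 + |k|) for all k ∈ ℤ, and let ξ(z) = e^{iπz}·(1 − z/y_0)·∏_{k=1}^∞ [(1 − z/y_k)(1 − z/y_{−k})] be the associated entire function. Then for every z ∈ ℂ not belonging to {y_k : k ∈ ℤ}, the set {k ∈ ℤ : |y_k| < A} is finite for each A > 0 and ξ′(z)/ξ(z) = iπ + lim_{A→∞} Σ_{k : |y_k| < A} 1/(z − y_k). -/

import Mathlib

open Filter Topology

/-- The entire function `ξ(z) = e^{iπz} (1 − z/y₀) ∏_{k≥1} (1 − z/y_k)(1 − z/y_{−k})` associated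
to a sequence `y : ℤ → ℝ`. -/
noncomputable def xiFun (y : ℤ → ℝ) : ℂ → ℂ := fun z =>
  Complex.exp (Real.pi * Complex.I * z) * (1 - z / (y 0 : ℂ)) *
    ∏' k : ℕ, ((1 - z / (y ((k : ℤ) + 1) : ℂ)) * (1 - z / (y (-((k : ℤ) + 1)) : ℂ)))

/-!
Pair the indices `k` and `-k`. In
`1/(z - b) + 1/(z - c) = (2z/(bc) - (1/b + 1/c)) / ((1 - z/b)(1 - z/c))`
the denominator tends to `1` as `b = y_k` and `c = y_{-k}` go to infinity, so the paired series, and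
likewise the paired product, converges as soon as `∑ (1/y_k + 1/y_{-k})` and `∑ 1/(y_k y_{-k})` do;
differentiating the product logarithmically gives the limit of the sums over `|k| ≤ K`.

To cut at `|y_k| < A` instead, only `|y_k| ~ |k|` is needed: `{|y_k| < A}` and `{|k| ≤ A}` differ by
indices with `|k| = A + o(A)`, hence by `o(A)` of them, and each such term is `O(1/A)`.
-/

open Asymptotics SummationFilter

section PairedProduct

variable {ι : Type*} {b c : ι → ℂ}

lemma norm_one_sub_div_mul_one_sub_div_sub_one_le (b c : ℂ) {z : ℂ} {R : ℝ} (hz : ‖z‖ ≤ R) :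
    ‖(1 - z / b) * (1 - z / c) - 1‖ ≤ R * ‖b⁻¹ + c⁻¹‖ + R ^ 2 * ‖b⁻¹ * c⁻¹‖ := by
  have expand : (1 - z / b) * (1 - z / c) - 1 = z ^ 2 * (b⁻¹ * c⁻¹) - z * (b⁻¹ + c⁻¹) := by ring
  calc ‖(1 - z / b) * (1 - z / c) - 1‖
      ≤ ‖z ^ 2 * (b⁻¹ * c⁻¹)‖ + ‖z * (b⁻¹ + c⁻¹)‖ := expand ▸ norm_sub_le _ _
    _ = ‖z‖ * ‖b⁻¹ + c⁻¹‖ + ‖z‖ ^ 2 * ‖b⁻¹ * c⁻¹‖ := by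
        rw [norm_mul, norm_mul z, norm_pow, add_comm]
    _ ≤ R * ‖b⁻¹ + c⁻¹‖ + R ^ 2 * ‖b⁻¹ * c⁻¹‖ := by gcongr

lemma summable_norm_one_sub_div_mul_one_sub_div_sub_one
    (hadd : Summable fun i => (b i)⁻¹ + (c i)⁻¹) (hmul : Summable fun i => (b i)⁻¹ * (c i)⁻¹)
    (z : ℂ) : Summable fun i => ‖(1 - z / b i) * (1 - z / c i) - 1‖ :=
  .of_nonneg_of_le (fun _ => norm_nonneg _)
    (fun i => norm_one_sub_div_mul_one_sub_div_sub_one_le (b i) (c i) le_rfl)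
    ((hadd.norm.mul_left ‖z‖).add (hmul.norm.mul_left (‖z‖ ^ 2)))

lemma hasProdLocallyUniformlyOn_one_sub_div_mul_one_sub_div
    (hadd : Summable fun i => (b i)⁻¹ + (c i)⁻¹) (hmul : Summable fun i => (b i)⁻¹ * (c i)⁻¹) :
    HasProdLocallyUniformlyOn (fun i z => (1 - z / b i) * (1 - z / c i))
      (fun z => ∏' i, (1 - z / b i) * (1 - z / c i)) Set.univ := by
  refine hasProdLocallyUniformlyOn_of_forall_compact isOpen_univ fun K _ hK => ?_
  obtain ⟨R, hR⟩ := hK.isBounded.exists_norm_le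
  simpa only [add_sub_cancel] using Summable.hasProdUniformlyOn_one_add
    (f := fun i z => (1 - z / b i) * (1 - z / c i) - 1) hK
    ((hadd.norm.mul_left R).add (hmul.norm.mul_left (R ^ 2)))
    (.of_forall fun i z hz => norm_one_sub_div_mul_one_sub_div_sub_one_le (b i) (c i) (hR z hz))
    (fun i => by fun_prop)

lemma differentiable_tprod_one_sub_div_mul_one_sub_div
    (hadd : Summable fun i => (b i)⁻¹ + (c i)⁻¹) (hmul : Summable fun i => (b i)⁻¹ * (c i)⁻¹) :
    Differentiable ℂ fun z => ∏' i, (1 - z / b i) * (1 - z / c i) := by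
  rw [← differentiableOn_univ]
  exact TendstoLocallyUniformlyOn.differentiableOn
    (hasProdLocallyUniformlyOn_one_sub_div_mul_one_sub_div hadd hmul)
    (.of_forall fun s => by fun_prop) isOpen_univ

lemma one_sub_div_ne_zero {a z : ℂ} (ha : a ≠ 0) (hz : z ≠ a) : 1 - z / a ≠ 0 := by
  rw [one_sub_div ha]
  exact div_ne_zero (sub_ne_zero.2 hz.symm) ha

lemma tprod_one_sub_div_mul_one_sub_div_ne_zero (hb : ∀ i, b i ≠ 0) (hc : ∀ i, c i ≠ 0)
    (hadd : Summable fun i => (b i)⁻¹ + (c i)⁻¹) (hmul : Summable fun i => (b i)⁻¹ * (c i)⁻¹)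
    {z : ℂ} (hzb : ∀ i, z ≠ b i) (hzc : ∀ i, z ≠ c i) :
    ∏' i, (1 - z / b i) * (1 - z / c i) ≠ 0 := by
  simpa only [add_sub_cancel] using tprod_one_add_ne_zero_of_summable
    (f := fun i => (1 - z / b i) * (1 - z / c i) - 1)
    (fun i => by
      rw [add_sub_cancel]
      exact mul_ne_zero (one_sub_div_ne_zero (hb i) (hzb i)) (one_sub_div_ne_zero (hc i) (hzc i)))
    (summable_norm_one_sub_div_mul_one_sub_div_sub_one hadd hmul z)

lemma summable_one_div_sub_add_one_div_sub (hb : ∀ i, b i ≠ 0) (hc : ∀ i, c i ≠ 0)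
    (hadd : Summable fun i => (b i)⁻¹ + (c i)⁻¹) (hmul : Summable fun i => (b i)⁻¹ * (c i)⁻¹)
    {z : ℂ} (hzb : ∀ i, z ≠ b i) (hzc : ∀ i, z ≠ c i) :
    Summable fun i => 1 / (z - b i) + 1 / (z - c i) := by
  have tendsto_factor : Tendsto (fun i => (1 - z / b i) * (1 - z / c i)) cofinite (𝓝 1) :=
    tendsto_sub_nhds_zero_iff.1 <| tendsto_zero_iff_norm_tendsto_zero.2
      (summable_norm_one_sub_div_mul_one_sub_div_sub_one hadd hmul z).tendsto_cofinite_zero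
  have summable_num : Summable fun i => 2 * z * ((b i)⁻¹ * (c i)⁻¹) - ((b i)⁻¹ + (c i)⁻¹) :=
    (hmul.mul_left (2 * z)).sub hadd
  refine (summable_num.norm.mul_tendsto_const (tendsto_factor.inv₀ one_ne_zero)).congr fun i => ?_
  have := hb i
  have := hc i
  have := sub_ne_zero.2 (hzb i)
  have := sub_ne_zero.2 (hzc i)
  have := sub_ne_zero.2 (hzb i).symm
  have := sub_ne_zero.2 (hzc i).symm
  rw [one_sub_div (hb i), one_sub_div (hc i)]
  field_simp
  ring

lemma logDeriv_one_sub_div {a z : ℂ} (ha : a ≠ 0) (hz : z ≠ a) :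
    logDeriv (fun w : ℂ => 1 - w / a) z = 1 / (z - a) := by
  have h : HasDerivAt (fun w : ℂ => 1 - w / a) (-(1 / a)) z :=
    ((hasDerivAt_id z).div_const a).const_sub 1
  rw [logDeriv_apply, h.deriv, one_sub_div ha, ← neg_sub z a]
  have := sub_ne_zero.2 hz
  field_simp

lemma logDeriv_one_sub_div_mul_one_sub_div {b c z : ℂ} (hb : b ≠ 0) (hc : c ≠ 0) (hzb : z ≠ b)
    (hzc : z ≠ c) :
    logDeriv (fun w => (1 - w / b) * (1 - w / c)) z = 1 / (z - b) + 1 / (z - c) := by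
  rw [logDeriv_mul z (one_sub_div_ne_zero hb hzb) (one_sub_div_ne_zero hc hzc) (by fun_prop)
    (by fun_prop), logDeriv_one_sub_div hb hzb, logDeriv_one_sub_div hc hzc]

lemma logDeriv_tprod_one_sub_div_mul_one_sub_div (hb : ∀ i, b i ≠ 0) (hc : ∀ i, c i ≠ 0)
    (hadd : Summable fun i => (b i)⁻¹ + (c i)⁻¹) (hmul : Summable fun i => (b i)⁻¹ * (c i)⁻¹)
    {z : ℂ} (hzb : ∀ i, z ≠ b i) (hzc : ∀ i, z ≠ c i) :
    logDeriv (fun w => ∏' i, (1 - w / b i) * (1 - w / c i)) z =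
      ∑' i, (1 / (z - b i) + 1 / (z - c i)) := by
  have logDeriv_factor i := logDeriv_one_sub_div_mul_one_sub_div (hb i) (hc i) (hzb i) (hzc i)
  simp only [← logDeriv_factor]
  refine logDeriv_tprod_eq_tsum isOpen_univ (Set.mem_univ z) (fun i => ?_) (fun i => by fun_prop)
    ?_ (hasProdLocallyUniformlyOn_one_sub_div_mul_one_sub_div hadd
      hmul).multipliableLocallyUniformlyOn
    (tprod_one_sub_div_mul_one_sub_div_ne_zero hb hc hadd hmul hzb hzc)
  · exact mul_ne_zero (one_sub_div_ne_zero (hb i) (hzb i)) (one_sub_div_ne_zero (hc i) (hzc i))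
  · simpa only [logDeriv_factor] using
      summable_one_div_sub_add_one_div_sub hb hc hadd hmul hzb hzc

end PairedProduct

section CutOff

variable {E : Type*}

lemma sum_Icc_neg_eq_add_sum_range [AddCommGroup E] (f : ℤ → E) (N : ℕ) :
    ∑ k ∈ Finset.Icc (-(N : ℤ)) N, f k =
      f 0 + ∑ n ∈ Finset.range N, (f ((n : ℤ) + 1) + f (-((n : ℤ) + 1))) := by
  induction N with
  | zero => simp
  | succ N ih =>
    rw [Finset.sum_range_succ, ← add_assoc, ← ih, Nat.cast_succ,
      Finset.sum_Icc_succ_eq_add_endpoints, add_comm]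

lemma hasSum_symmetricIcc_of_summable_add_neg [AddCommGroup E] [TopologicalSpace E]
    [ContinuousAdd E] {f : ℤ → E}
    (hf : Summable fun n : ℕ => f ((n : ℤ) + 1) + f (-((n : ℤ) + 1))) :
    HasSum f (f 0 + ∑' n : ℕ, (f ((n : ℤ) + 1) + f (-((n : ℤ) + 1)))) (symmetricIcc ℤ) := by
  simp only [hasSum_symmetricIcc_iff, sum_Icc_neg_eq_add_sum_range]
  exact hf.hasSum.tendsto_sum_nat.const_add (f 0)

lemma abs_intCast_le_eq_coe_Icc {A : ℝ} (hA : 0 ≤ A) :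
    {k : ℤ | |(k : ℝ)| ≤ A} = Finset.Icc (-(⌊A⌋₊ : ℤ)) ⌊A⌋₊ := by
  ext k
  rw [Finset.coe_Icc, Set.mem_Icc, ← abs_le, ← Int.natCast_natAbs, Int.ofNat_le,
    Nat.le_floor_iff hA, Nat.cast_natAbs, Int.cast_abs, Set.mem_ofPred_eq]

lemma finite_abs_intCast_le (A : ℝ) : {k : ℤ | |(k : ℝ)| ≤ A}.Finite := by
  rcases le_or_gt 0 A with hA | hA
  · exact abs_intCast_le_eq_coe_Icc hA ▸ Finset.finite_toSet _
  · exact Set.finite_empty.subset fun k hk => absurd (hA.trans_le (abs_nonneg _)) (not_lt.2 hk)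

lemma tendsto_finsum_abs_intCast_le [AddCommMonoid E] [TopologicalSpace E] {f : ℤ → E} {L : E}
    (hf : HasSum f L (symmetricIcc ℤ)) :
    Tendsto (fun A : ℝ => ∑ᶠ k ∈ {k : ℤ | |(k : ℝ)| ≤ A}, f k) atTop (𝓝 L) := by
  refine ((hasSum_symmetricIcc_iff.1 hf).comp tendsto_nat_floor_atTop).congr' ?_
  filter_upwards [eventually_ge_atTop 0] with A hA
  exact (finsum_mem_coe_finset f _).symm.trans
    (congrArg (fun s : Set ℤ => ∑ᶠ k ∈ s, f k) (abs_intCast_le_eq_coe_Icc hA).symm)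

lemma norm_finsum_sub_finsum_le_ncard_symmDiff_mul [SeminormedAddCommGroup E] {ι : Type*}
    {s t : Set ι} (hs : s.Finite) (ht : t.Finite) {f : ι → E} {M : ℝ}
    (hf : ∀ i ∈ symmDiff s t, ‖f i‖ ≤ M) :
    ‖∑ᶠ i ∈ s, f i - ∑ᶠ i ∈ t, f i‖ ≤ (symmDiff s t).ncard * M := by
  classical
  lift s to Finset ι using hs
  lift t to Finset ι using ht
  rw [← Finset.coe_symmDiff] at hf ⊢
  rw [finsum_mem_coe_finset, finsum_mem_coe_finset, Set.ncard_coe_finset,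
    ← Finset.sum_sdiff_sub_sum_sdiff]
  calc ‖∑ i ∈ s \ t, f i - ∑ i ∈ t \ s, f i‖
      ≤ ∑ i ∈ s \ t, ‖f i‖ + ∑ i ∈ t \ s, ‖f i‖ :=
        (norm_sub_le _ _).trans (add_le_add (norm_sum_le _ _) (norm_sum_le _ _))
    _ = ∑ i ∈ symmDiff s t, ‖f i‖ := (Finset.sum_union disjoint_sdiff_sdiff).symm
    _ ≤ (symmDiff s t).card * M := by
        rw [← nsmul_eq_mul]
        exact Finset.sum_le_card_nsmul _ _ _ hf

lemma card_Icc_ceil_floor_le (A : ℝ) {R : ℝ} (hR : 0 ≤ R) :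
    ((Finset.Icc ⌈A - R⌉ ⌊A + R⌋).card : ℝ) ≤ 2 * R + 1 := by
  have h : ((Finset.Icc ⌈A - R⌉ ⌊A + R⌋).card : ℝ) =
      max ((⌊A + R⌋ : ℝ) + 1 - ⌈A - R⌉) 0 := by
    rw [Int.card_Icc]
    exact_mod_cast Int.toNat_eq_max _
  rw [h]
  exact max_le (by linarith [Int.floor_le (A + R), Int.le_ceil (A - R)]) (by positivity)

lemma ncard_le_of_abs_abs_intCast_sub_le {s : Set ℤ} {A R : ℝ} (hR : 0 ≤ R)
    (hs : ∀ k ∈ s, |(|(k : ℝ)| - A)| ≤ R) : (s.ncard : ℝ) ≤ 2 * (2 * R + 1) := by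
  set I := Finset.Icc ⌈A - R⌉ ⌊A + R⌋
  have mem_I {k : ℤ} (hk : |(k : ℝ) - A| ≤ R) : k ∈ I :=
    Finset.mem_Icc.2 ⟨Int.ceil_le.2 (by linarith [(abs_le.1 hk).1]),
      Int.le_floor.2 (by linarith [(abs_le.1 hk).2])⟩
  have s_subset : s ⊆ (I ∪ I.image Neg.neg : Finset ℤ) := fun k hk => by
    rw [Finset.mem_coe, Finset.mem_union, Finset.mem_image]
    rcases abs_choice (k : ℝ) with h | h
    · exact .inl (mem_I (h ▸ hs k hk))
    · exact .inr ⟨-k, mem_I (by rw [Int.cast_neg, ← h]; exact hs k hk), neg_neg k⟩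
  have ncard_le : s.ncard ≤ I.card + I.card :=
    calc s.ncard ≤ ((I ∪ I.image Neg.neg : Finset ℤ) : Set ℤ).ncard :=
          Set.ncard_le_ncard s_subset (Finset.finite_toSet _)
      _ = (I ∪ I.image Neg.neg).card := Set.ncard_coe_finset _
      _ ≤ I.card + (I.image Neg.neg).card := Finset.card_union_le _ _
      _ ≤ I.card + I.card := Nat.add_le_add_left Finset.card_image_le _
  calc (s.ncard : ℝ) ≤ I.card + I.card := by exact_mod_cast ncard_le
    _ ≤ 2 * (2 * R + 1) := by linarith [card_Icc_ceil_floor_le A hR]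

lemma tendsto_abs_intCast_cofinite : Tendsto (fun k : ℤ => |(k : ℝ)|) cofinite atTop :=
  tendsto_norm_comp_cofinite_atTop_of_isClosedEmbedding Int.isClosedEmbedding_coe_real

lemma finite_lt_of_tendsto_cofinite {ι : Type*} {r : ι → ℝ} (hr : Tendsto r cofinite atTop)
    (A : ℝ) : {k | r k < A}.Finite := by
  simpa only [eventually_cofinite, not_le] using hr.eventually_ge_atTop A

lemma eventually_atTop_forall_of_eventually_cofinite {ι : Type*} (r : ι → ℝ) {p : ι → Prop}
    (hp : ∀ᶠ k in cofinite, p k) : ∀ᶠ A : ℝ in atTop, ∀ k, A ≤ r k → p k := by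
  filter_upwards [(eventually_all_finite (eventually_cofinite.1 hp)).2
    fun k _ => eventually_gt_atTop (r k)] with A hA k hk
  exact by_contra fun h => (hA k h).not_ge hk

variable {r : ℤ → ℝ}

lemma eventually_abs_abs_intCast_sub_le (hr : r ~[cofinite] fun k => |(k : ℝ)|) {ε : ℝ}
    (hε : 0 < ε) : ∀ᶠ A : ℝ in atTop,
      ∀ k ∈ symmDiff {k | r k < A} {k | |(k : ℝ)| ≤ A}, |(|(k : ℝ)| - A)| ≤ ε * A := by
  obtain ⟨δ, hδ, hδ_half, hδε⟩ : ∃ δ : ℝ, 0 < δ ∧ δ ≤ 1 / 2 ∧ 2 * δ ≤ ε :=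
    ⟨min (1 / 2) (ε / 2), by positivity, min_le_left _ _,
      by linarith [min_le_right (1 / 2) (ε / 2)]⟩
  have near : ∀ᶠ k : ℤ in cofinite, |(r k - |(k : ℝ)|)| ≤ δ * |(k : ℝ)| := by
    simpa only [Pi.sub_apply, Real.norm_eq_abs, abs_abs] using hr.isLittleO.bound hδ
  filter_upwards [eventually_gt_atTop 0, eventually_atTop_forall_of_eventually_cofinite r near,
    eventually_atTop_forall_of_eventually_cofinite (fun k : ℤ => |(k : ℝ)|) near]
    with A hA near_of_le near_of_le_abs k hk
  rcases hk with ⟨hrk : r k < A, hk⟩ | ⟨hk : |(k : ℝ)| ≤ A, hrk⟩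
  · rw [Set.mem_ofPred_eq, not_le] at hk
    have := abs_le.1 (near_of_le_abs k hk.le)
    rw [abs_le]
    constructor <;> nlinarith
  · rw [Set.mem_ofPred_eq, not_lt] at hrk
    have := abs_le.1 (near_of_le k hrk)
    rw [abs_le]
    constructor <;> nlinarith

lemma isLittleO_ncard_symmDiff (hr : r ~[cofinite] fun k => |(k : ℝ)|) :
    (fun A : ℝ => ((symmDiff {k | r k < A} {k | |(k : ℝ)| ≤ A}).ncard : ℝ)) =o[atTop]
      fun A => A := by
  refine isLittleO_iff.2 fun ε hε => ?_
  filter_upwards [eventually_abs_abs_intCast_sub_le hr (by positivity : 0 < ε / 8),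
    eventually_gt_atTop 0, eventually_ge_atTop (4 / ε)] with A hmem hA hεA
  rw [div_le_iff₀ hε] at hεA
  rw [RCLike.norm_natCast, Real.norm_of_nonneg hA.le]
  linarith [ncard_le_of_abs_abs_intCast_sub_le (by positivity) hmem]

lemma exists_eventually_norm_le_div [SeminormedAddCommGroup E]
    (hr : r ~[cofinite] fun k => |(k : ℝ)|) {f : ℤ → E}
    (hf : f =O[cofinite] fun k => (k : ℝ)⁻¹) :
    ∃ M : ℝ, ∀ᶠ A : ℝ in atTop,
      ∀ k ∈ symmDiff {k | r k < A} {k | |(k : ℝ)| ≤ A}, ‖f k‖ ≤ M / A := by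
  obtain ⟨M, hM, hfM⟩ := hf.exists_pos
  refine ⟨2 * M, ?_⟩
  filter_upwards [eventually_abs_abs_intCast_sub_le hr one_half_pos, eventually_gt_atTop 0,
    eventually_atTop_forall_of_eventually_cofinite (fun k : ℤ => 2 * |(k : ℝ)|) hfM.bound]
    with A hmem hA hfA k hk
  have half_le : A / 2 ≤ |(k : ℝ)| := by linarith [(abs_le.1 (hmem k hk)).1]
  calc ‖f k‖ ≤ M * ‖(k : ℝ)⁻¹‖ := hfA k (by linarith)
    _ = M / |(k : ℝ)| := by rw [norm_inv, Real.norm_eq_abs, div_eq_mul_inv]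
    _ ≤ M / (A / 2) := by gcongr
    _ = 2 * M / A := by field_simp

theorem tendsto_finsum_lt_of_hasSum_symmetricIcc [SeminormedAddCommGroup E]
    (hr : r ~[cofinite] fun k => |(k : ℝ)|) {f : ℤ → E}
    (hf : f =O[cofinite] fun k => (k : ℝ)⁻¹) {L : E} (hL : HasSum f L (symmetricIcc ℤ)) :
    Tendsto (fun A : ℝ => ∑ᶠ k ∈ {k | r k < A}, f k) atTop (𝓝 L) := by
  have finite_lt := finite_lt_of_tendsto_cofinite
    (hr.symm.tendsto_atTop tendsto_abs_intCast_cofinite)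
  obtain ⟨M, hM⟩ := exists_eventually_norm_le_div hr hf
  have tendsto_diff : Tendsto (fun A : ℝ => ∑ᶠ k ∈ {k | r k < A}, f k -
      ∑ᶠ k ∈ {k : ℤ | |(k : ℝ)| ≤ A}, f k) atTop (𝓝 0) := by
    refine squeeze_zero_norm' ?_ (by simpa only [mul_zero] using
      (isLittleO_ncard_symmDiff hr).tendsto_div_nhds_zero.const_mul M)
    filter_upwards [hM] with A hMA
    refine (norm_finsum_sub_finsum_le_ncard_symmDiff_mul (finite_lt A)
      (finite_abs_intCast_le A) hMA).trans_eq ?_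
    ring
  simpa using tendsto_diff.add (tendsto_finsum_abs_intCast_le hL)

end CutOff

section AsymptoticToIntegers

variable {y : ℤ → ℝ}

lemma isEquivalent_abs {α : Type*} {l : Filter α} {u v : α → ℝ} (h : u ~[l] v) :
    (fun a => |u a|) ~[l] fun a => |v a| :=
  ((isBigO_of_le l fun a => abs_abs_sub_abs_le_abs_sub (u a) (v a)).trans_isLittleO
    h.isLittleO).trans_isBigO (isBigO_refl v l).abs_right

lemma tendsto_natCast_add_one_cofinite :
    Tendsto (fun n : ℕ => (n : ℤ) + 1) atTop cofinite := by
  rw [← Nat.cofinite_eq_atTop]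
  exact Function.Injective.tendsto_cofinite fun m n h => by simpa using h

lemma tendsto_neg_natCast_add_one_cofinite :
    Tendsto (fun n : ℕ => -((n : ℤ) + 1)) atTop cofinite :=
  neg_injective.tendsto_cofinite.comp tendsto_natCast_add_one_cofinite

lemma isBigO_one_div_sub (hy : y ~[cofinite] fun k => (k : ℝ)) (z : ℂ) :
    (fun k => 1 / (z - (y k : ℂ))) =O[cofinite] fun k => (k : ℝ)⁻¹ := by
  have ofReal_equiv : (fun k => (y k : ℂ)) ~[cofinite] fun k : ℤ => ((k : ℝ) : ℂ) := by
    have := Complex.isLittleO_ofReal_right.2 (Complex.isLittleO_ofReal_left.2 hy.isLittleO)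
    simpa [IsEquivalent, Pi.sub_def] using this
  have const_sub_equiv := (ofReal_equiv.neg.const_add_of_norm_tendsto_atTop (c := z)
    (by simpa only [Function.comp_def, Pi.neg_apply, norm_neg, Complex.norm_real, Real.norm_eq_abs]
      using tendsto_abs_intCast_cofinite)).inv
  refine (const_sub_equiv.isBigO.trans ?_).congr_left fun k => by simp [sub_eq_add_neg]
  exact isBigO_of_le _ fun k => by
    simp only [Pi.inv_apply, norm_inv, norm_neg, Complex.norm_real, le_refl]

lemma isBigO_inv_mul_inv_neg (hy : y ~[cofinite] fun k => (k : ℝ)) :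
    (fun n : ℕ => (y ((n : ℤ) + 1))⁻¹ * (y (-((n : ℤ) + 1)))⁻¹) =O[atTop]
      fun n => ((n : ℝ) + 1) ^ (-2 : ℝ) := by
  have pos := (hy.inv.isBigO.comp_tendsto tendsto_natCast_add_one_cofinite).mul
    (hy.inv.isBigO.comp_tendsto tendsto_neg_natCast_add_one_cofinite)
  have nonneg (n : ℕ) : (0 : ℝ) ≤ n + 1 := by positivity
  refine pos.trans (isBigO_of_le _ fun n => le_of_eq ?_)
  rw [Real.rpow_neg (nonneg n), Real.rpow_two]
  simp only [Function.comp_apply, Pi.inv_apply, Int.cast_neg, Int.cast_add, Int.cast_natCast,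
    Int.cast_one, norm_mul, norm_inv, norm_neg, sq, mul_inv]

lemma summable_natCast_add_one_rpow {p : ℝ} (hp : p < -1) :
    Summable fun n : ℕ => ((n : ℝ) + 1) ^ p := by
  simpa only [Nat.cast_succ] using (summable_nat_add_iff 1).2 (Real.summable_nat_rpow.2 hp)

lemma summable_inv_mul_inv_neg (hy : y ~[cofinite] fun k => (k : ℝ)) :
    Summable fun n : ℕ => (y ((n : ℤ) + 1))⁻¹ * (y (-((n : ℤ) + 1)))⁻¹ :=
  summable_of_isBigO_nat (summable_natCast_add_one_rpow (by norm_num)) (isBigO_inv_mul_inv_neg hy)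

end AsymptoticToIntegers

section PolynomialDeviation

variable {y : ℤ → ℝ} {θ : ℝ}

lemma isLittleO_rpow_id_atTop (hθ : θ < 1) : (fun x : ℝ => x ^ θ) =o[atTop] fun x => x := by
  refine isLittleO_of_tendsto' ?_ ((tendsto_rpow_neg_atTop (sub_pos.2 hθ)).congr' ?_)
  · filter_upwards [eventually_ne_atTop 0] with x hx h using absurd h hx
  · filter_upwards [eventually_gt_atTop 0] with x hx
    rw [neg_sub, Real.rpow_sub_one hx.ne']

lemma isEquivalent_intCast_of_sub_isBigO_rpow (hθ : θ < 1)
    (hy : (fun k => y k - k) =O[cofinite] fun k : ℤ => |(k : ℝ)| ^ θ) :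
    y ~[cofinite] fun k => (k : ℝ) := by
  exact hy.trans_isLittleO
    (((isLittleO_rpow_id_atTop hθ).comp_tendsto tendsto_abs_intCast_cofinite).trans_isBigO
      (isBigO_refl _ _).abs_left)

lemma isBigO_add_neg (hy : (fun k => y k - k) =O[cofinite] fun k : ℤ => |(k : ℝ)| ^ θ) :
    (fun n : ℕ => y ((n : ℤ) + 1) + y (-((n : ℤ) + 1))) =O[atTop]
      fun n => ((n : ℝ) + 1) ^ θ := by
  have abs_cast (n : ℕ) : |(n : ℝ) + 1| = n + 1 := abs_of_nonneg (by positivity)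
  have pos := hy.comp_tendsto tendsto_natCast_add_one_cofinite
  have neg := hy.comp_tendsto tendsto_neg_natCast_add_one_cofinite
  simp only [Function.comp_def, Int.cast_neg, abs_neg, Int.cast_add, Int.cast_natCast,
    Int.cast_one, abs_cast] at pos neg
  exact (pos.add neg).congr_left fun n => by ring

lemma summable_inv_add_inv_neg_of_sub_isBigO_rpow (hθ : θ < 1) (hy₀ : ∀ k, y k ≠ 0)
    (hy : (fun k => y k - k) =O[cofinite] fun k : ℤ => |(k : ℝ)| ^ θ) :
    Summable fun n : ℕ => (y ((n : ℤ) + 1))⁻¹ + (y (-((n : ℤ) + 1)))⁻¹ := by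
  refine summable_of_isBigO_nat (summable_natCast_add_one_rpow (by linarith : θ + -2 < -1)) ?_
  refine ((isBigO_add_neg hy).mul (isBigO_inv_mul_inv_neg
    (isEquivalent_intCast_of_sub_isBigO_rpow hθ hy))).congr (fun n => ?_) fun n => ?_
  · rw [inv_add_inv (hy₀ _) (hy₀ _), div_eq_mul_inv, mul_inv]
  · rw [Real.rpow_add (by positivity)]

lemma isBigO_log_two_add_abs_intCast (hθ : 0 < θ) :
    (fun k : ℤ => Real.log (2 + |(k : ℝ)|)) =O[cofinite] fun k => |(k : ℝ)| ^ θ := by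
  have log_two_add_isBigO : (fun x : ℝ => Real.log (2 + x)) =O[atTop] Real.log := by
    refine .of_bound 2 ?_
    filter_upwards [eventually_ge_atTop 2] with x hx
    rw [Real.norm_of_nonneg (Real.log_nonneg (by linarith)),
      Real.norm_of_nonneg (Real.log_nonneg (by linarith)), ← Nat.cast_two, ← Real.log_pow]
    exact Real.log_le_log (by positivity) (by push_cast; nlinarith)
  exact (log_two_add_isBigO.trans
    (isLittleO_log_rpow_atTop hθ).isBigO).comp_tendsto tendsto_abs_intCast_cofinite

lemma sub_isBigO_rpow_of_abs_sub_le_mul_log {C : ℝ} (hθ : 0 < θ)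
    (hy : ∀ k : ℤ, |y k - k| ≤ C * Real.log (2 + |(k : ℝ)|)) :
    (fun k => y k - k) =O[cofinite] fun k : ℤ => |(k : ℝ)| ^ θ :=
  (IsBigO.of_bound C <| .of_forall fun k => by
    have log_nonneg : 0 ≤ Real.log (2 + |(k : ℝ)|) :=
      Real.log_nonneg (by linarith [abs_nonneg (k : ℝ)])
    rw [Real.norm_eq_abs, Real.norm_of_nonneg log_nonneg]
    exact hy k).trans (isBigO_log_two_add_abs_intCast hθ)

end PolynomialDeviation

section LogDerivative

variable {y : ℤ → ℝ}

lemma logDeriv_exp_const_mul (a z : ℂ) : logDeriv (fun w => Complex.exp (a * w)) z = a := by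
  have h : HasDerivAt (fun w => Complex.exp (a * w)) (Complex.exp (a * z) * (a * 1)) z :=
    ((hasDerivAt_id z).const_mul a).cexp
  rw [logDeriv_apply, h.deriv, mul_one, mul_div_cancel_left₀ _ (Complex.exp_ne_zero _)]

lemma logDeriv_xiFun (hy₀ : ∀ k, y k ≠ 0)
    (hadd : Summable fun n : ℕ => (y ((n : ℤ) + 1) : ℂ)⁻¹ + (y (-((n : ℤ) + 1)) : ℂ)⁻¹)
    (hmul : Summable fun n : ℕ => (y ((n : ℤ) + 1) : ℂ)⁻¹ * (y (-((n : ℤ) + 1)) : ℂ)⁻¹)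
    {z : ℂ} (hz : ∀ k, z ≠ (y k : ℂ)) :
    logDeriv (xiFun y) z = Real.pi * Complex.I + (1 / (z - (y 0 : ℂ)) +
      ∑' n : ℕ, (1 / (z - (y ((n : ℤ) + 1) : ℂ)) + 1 / (z - (y (-((n : ℤ) + 1)) : ℂ)))) := by
  have ofReal_ne_zero k : (y k : ℂ) ≠ 0 := Complex.ofReal_ne_zero.2 (hy₀ k)
  have exp_ne_zero := Complex.exp_ne_zero (Real.pi * Complex.I * z)
  have factor_ne_zero := one_sub_div_ne_zero (ofReal_ne_zero 0) (hz 0)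
  have tprod_ne_zero := tprod_one_sub_div_mul_one_sub_div_ne_zero (fun n => ofReal_ne_zero _)
    (fun n => ofReal_ne_zero _) hadd hmul (fun n => hz _) fun n => hz _
  have logDeriv_exp_mul :
      logDeriv (fun w => Complex.exp (Real.pi * Complex.I * w) * (1 - w / (y 0 : ℂ))) z =
        Real.pi * Complex.I + 1 / (z - (y 0 : ℂ)) := by
    rw [logDeriv_mul z exp_ne_zero factor_ne_zero (by fun_prop) (by fun_prop),
      logDeriv_exp_const_mul, logDeriv_one_sub_div (ofReal_ne_zero 0) (hz 0)]
  rw [← add_assoc, ← logDeriv_exp_mul, ← logDeriv_tprod_one_sub_div_mul_one_sub_div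
    (fun n => ofReal_ne_zero _) (fun n => ofReal_ne_zero _) hadd hmul (fun n => hz _) fun n => hz _]
  exact logDeriv_mul z (mul_ne_zero exp_ne_zero factor_ne_zero) tprod_ne_zero (by fun_prop)
    (differentiable_tprod_one_sub_div_mul_one_sub_div hadd hmul z)

end LogDerivative

theorem stmt_7_general (y : ℤ → ℝ) (hy₀ : ∀ k, y k ≠ 0) (hy : y ~[cofinite] fun k => (k : ℝ))
    (hsum : Summable fun n : ℕ => (y ((n : ℤ) + 1))⁻¹ + (y (-((n : ℤ) + 1)))⁻¹)
    (z : ℂ) (hz : ∀ k, z ≠ (y k : ℂ)) :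
    (∀ A : ℝ, {k : ℤ | |y k| < A}.Finite) ∧
    ∃ L : ℂ,
      Tendsto (fun A : ℝ => ∑ᶠ k ∈ {k : ℤ | |y k| < A}, 1 / (z - (y k : ℂ))) atTop (𝓝 L) ∧
      deriv (xiFun y) z / xiFun y z = Real.pi * Complex.I + L := by
  have ofReal_ne_zero k : (y k : ℂ) ≠ 0 := Complex.ofReal_ne_zero.2 (hy₀ k)
  have hadd : Summable fun n : ℕ => (y ((n : ℤ) + 1) : ℂ)⁻¹ + (y (-((n : ℤ) + 1)) : ℂ)⁻¹ := by
    exact_mod_cast Complex.summable_ofReal.2 hsum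
  have hmul : Summable fun n : ℕ => (y ((n : ℤ) + 1) : ℂ)⁻¹ * (y (-((n : ℤ) + 1)) : ℂ)⁻¹ := by
    exact_mod_cast Complex.summable_ofReal.2 (summable_inv_mul_inv_neg hy)
  have hasSum_symmetric := hasSum_symmetricIcc_of_summable_add_neg
    (f := fun k => 1 / (z - (y k : ℂ))) <| summable_one_div_sub_add_one_div_sub
      (fun n => ofReal_ne_zero _) (fun n => ofReal_ne_zero _) hadd hmul (fun n => hz _)
      fun n => hz _
  have habs := isEquivalent_abs hy
  exact ⟨finite_lt_of_tendsto_cofinite (habs.symm.tendsto_atTop tendsto_abs_intCast_cofinite), _,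
    tendsto_finsum_lt_of_hasSum_symmetricIcc habs (isBigO_one_div_sub hy z) hasSum_symmetric,
    logDeriv_xiFun hy₀ hadd hmul hz⟩

/-- If `y : ℤ → ℝ` is nonvanishing with `|y_k − k| ≤ C log(2+|k|)`, then for every `z` outside
`{y_k : k ∈ ℤ}`: the set `{k : |y_k| < A}` is finite for every `A > 0`, and
`ξ′(z)/ξ(z) = iπ + lim_{A→∞} Σ_{k : |y_k| < A} 1/(z − y_k)`. -/
theorem stmt_7 (C : ℝ) (hC : 0 < C) (y : ℤ → ℝ) (hy : ∀ k : ℤ, y k ≠ 0)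
    (hb : ∀ k : ℤ, |y k - k| ≤ C * Real.log (2 + |(k : ℝ)|))
    (z : ℂ) (hz : ∀ k : ℤ, z ≠ (y k : ℂ)) :
    (∀ A : ℝ, 0 < A → {k : ℤ | |y k| < A}.Finite) ∧
    ∃ L : ℂ,
      Tendsto (fun A : ℝ => ∑ᶠ k ∈ {k : ℤ | |y k| < A}, 1 / (z - (y k : ℂ))) atTop (𝓝 L) ∧
      deriv (xiFun y) z / xiFun y z = Real.pi * Complex.I + L := by
  have deviation := sub_isBigO_rpow_of_abs_sub_le_mul_log one_half_pos hb
  obtain ⟨finite, limit⟩ := stmt_7_general y hy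
    (isEquivalent_intCast_of_sub_isBigO_rpow one_half_lt_one deviation)
    (summable_inv_add_inv_neg_of_sub_isBigO_rpow one_half_lt_one hy deviation) z hz
  exact ⟨fun A _ => finite A, limit⟩
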